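/- If an operator J on partial functions is uniformly inflationary (f ≤subT J(f) via a fixed index), uniformly monotone, and uniformly conservative (J(f) ≡subT f′ for total f, with uniform indices), then f <subT J(f) for every partial function f that extends to a total hyperarithmetical (Δ¹₁) function; indeed J(f) ≡subT f implies ∅^(α) <subT f for every computable ordinal α. -/

import Mathlib

open Classical

noncomputable section

/-- `as` is a valid answer history for the sequential oracle computation of `Φ`
with oracle `g` on input `n`: at each round `k`, the machine outputs a query
`(false, q)` with `q` in the domain of `g`, answered by `g q = as[k]`. -/
def ValidHist (Φ : List ℕ →. Bool × ℕ) (g : ℕ →. ℕ) (n : ℕ) (as : List ℕ) : Prop :=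
  ∀ (k : ℕ) (hk : k < as.length), ∃ q : ℕ,
    (false, q) ∈ Φ (n :: as.take k) ∧ (as[k]'hk) ∈ g q

/-- The sequential oracle computation `Φ[g](n)` halts with output `m`. -/
def HaltsTo (Φ : List ℕ →. Bool × ℕ) (g : ℕ →. ℕ) (n m : ℕ) : Prop :=
  ∃ as : List ℕ, ValidHist Φ g n as ∧ (true, m) ∈ Φ (n :: as)

/-- subTuring reducibility: `f ⊆ Φ[g]` for some partial computable `Φ`. -/
def SubTuringLE (f g : ℕ →. ℕ) : Prop :=
  ∃ Φ : List ℕ →. Bool × ℕ, Partrec Φ ∧ ∀ n m, m ∈ f n → HaltsTo Φ g n m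

/-- subTuring equivalence. -/
def SubTuringEquiv (f g : ℕ →. ℕ) : Prop := SubTuringLE f g ∧ SubTuringLE g f

/-- The `e`-th partial computable function `List ℕ →. Bool × ℕ`,
obtained from the `e`-th partial recursive code. -/
def phi (e : ℕ) : List ℕ →. Bool × ℕ := fun l =>
  ((Denumerable.ofNat Nat.Partrec.Code e).eval (Encodable.encode l)).bind fun k =>
    Part.ofOption (Encodable.decode (α := Bool × ℕ) k)

/-- Reducibility via a specific index: `f ⊆ Φ_c[g]`. -/
def ReducesVia (f g : ℕ →. ℕ) (c : ℕ) : Prop :=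
  ∀ n m, m ∈ f n → HaltsTo (phi c) g n m

/-- The Turing jump of a total function (diagonal halting problem relative to it). -/
def TJump (X : ℕ → ℕ) : ℕ → ℕ := fun e =>
  if (∃ m, HaltsTo (phi e) (X : ℕ →. ℕ) e m) then 1 else 0

/-- Kleene's system of ordinal notations: `1` denotes `0`, `2^a` the successor of `a`,
and `3·5^e` a limit when the `e`-th partial computable function is total with
values that are notations. -/
inductive OrdNotation : ℕ → Type where
  | one : OrdNotation 1
  | succ : ∀ a, OrdNotation a → OrdNotation (2 ^ a)
  | lim : ∀ (e : ℕ) (g : ℕ → ℕ),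
      (∀ n, (Denumerable.ofNat Nat.Partrec.Code e).eval n = Part.some (g n)) →
      (∀ n, OrdNotation (g n)) → OrdNotation (3 * 5 ^ e)

/-- The iterated Turing jump `∅^(a)` along a notation `a`. -/
def Hset : ∀ a : ℕ, OrdNotation a → (ℕ → ℕ)
  | _, .one => fun _ => 0
  | _, .succ _ w => TJump (Hset _ w)
  | _, .lim _ g _ wg => fun p => Hset (g p.unpair.1) (wg p.unpair.1) p.unpair.2

/-- A predicate on `ℕ` is `Σ¹₁` (Kleene normal form `∃X ∀k R(n, X̄k)`). -/
def Sigma11 (S : ℕ → Prop) : Prop :=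
  ∃ R : ℕ → List ℕ → Bool, Computable₂ R ∧
    ∀ n, S n ↔ ∃ X : ℕ → ℕ, ∀ k, R n (List.ofFn fun i : Fin k => X i) = true

/-- A total function is `Δ¹₁` (hyperarithmetical) if its graph is both `Σ¹₁` and `Π¹₁`. -/
def Delta11Fun (h : ℕ → ℕ) : Prop :=
  Sigma11 (fun p => h p.unpair.1 = p.unpair.2) ∧
  Sigma11 (fun p => h p.unpair.1 ≠ p.unpair.2)

/-!
If `J f` is reducible to `f`, conservativity and monotonicity turn an index of a reduction of a
total `D` to `f` computably into an index of a reduction of `TJump D` to `f`. This uniform closure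
under the jump can be iterated along notations by effective transfinite recursion, the recursion
theorem supplying the indices at limits, so every `∅^(a)` is reducible to `f`.

For hyperarithmetical functions, consider disjoint `Σ¹₁` sets, given by trees `A x` and `B x`, and
the game in which one player builds a path through `A x` and the other a path through `B x`, the
first to leave their tree losing. Disjointness makes the game tree well-founded, so the winner can
be found by bar recursion. The winner separates the two sets, and separating the graph of `h` from
its complement computes `h`.

These reductions are strict: `f ≤ X ≤ f` would give `TJump X ≤ f ≤ X`, against diagonalization.
-/

section Indices

open Encodable Nat.Partrec

variable {α : Type*} [Primcodable α]

theorem eval_ofNat_partrec :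
    Partrec₂ fun c n => (Denumerable.ofNat Code c).eval n :=
  Code.eval_part.comp ((Computable.ofNat Code).comp .fst) .snd

theorem phi_partrec : Partrec₂ phi :=
  (eval_ofNat_partrec.comp .fst (Computable.encode.comp .snd)).bind
    (Computable.ofOption (Computable.decode.comp .snd)).to₂

/-- The s-m-n theorem for oracle machines. -/
theorem exists_computable_phi_eq {F : α → List ℕ →. Bool × ℕ} (hF : Partrec₂ F) :
    ∃ s : α → ℕ, Computable s ∧ ∀ a, phi (s a) = F a := by
  obtain ⟨c, hc⟩ := Code.exists_code.1 hF
  refine ⟨fun a => encode (Code.curry c (encode a)),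
    Computable.encode.comp (Code.primrec₂_curry.to_comp.comp (.const c) .encode), fun a => ?_⟩
  funext l
  have hpair : Nat.pair (encode a) (encode l) = encode (a, l) := rfl
  simp only [phi, Denumerable.ofNat_encode, Code.eval_curry, hc, hpair, encodek, Part.coe_some,
    Part.bind_some]
  ext ⟨b, o⟩
  cases b <;> simp

theorem exists_phi_eq {F : List ℕ →. Bool × ℕ} (hF : Partrec F) : ∃ e, phi e = F := by
  obtain ⟨s, -, hs⟩ :=
    exists_computable_phi_eq (α := Unit) (F := fun _ => F) (hF.comp Computable.snd).to₂
  exact ⟨s (), hs ()⟩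

/-- Kleene's recursion theorem. -/
theorem exists_self_referential_index {G : ℕ → α → ℕ} (hG : Computable₂ G) :
    ∃ c : ℕ, ∀ a, (Denumerable.ofNat Code c).eval (encode a) = Part.some (G c a) := by
  have hF : Partrec₂ fun (c : Code) (n : ℕ) =>
      (Part.ofOption (decode (α := α) n)).map (G (encode c)) :=
    Partrec.map (Computable.ofOption (Computable.decode.comp .snd))
      (hG.comp (Computable.encode.comp (Computable.fst.comp .fst)) .snd).to₂
  obtain ⟨c, hc⟩ := Code.fixed_point₂ hF
  exact ⟨encode c, fun a => by simp [hc]⟩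

end Indices

section Runs

variable {F F' : List ℕ →. Bool × ℕ} {g g' : ℕ →. ℕ} {n n' m m' : ℕ}

/-- `RunsTo F g n m as`: continued from the answer history `as`, the sequential oracle
computation `F[g](n)` halts with output `m`. Unlike `HaltsTo`, it supports induction on the
remaining queries. -/
inductive RunsTo (F : List ℕ →. Bool × ℕ) (g : ℕ →. ℕ) (n m : ℕ) : List ℕ → Prop
  | halt (as : List ℕ) : (true, m) ∈ F (n :: as) → RunsTo F g n m as
  | query (as : List ℕ) (q b : ℕ) : (false, q) ∈ F (n :: as) → b ∈ g q →
      RunsTo F g n m (as ++ [b]) → RunsTo F g n m as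

theorem ValidHist.concat {as : List ℕ} {q b : ℕ} (has : ValidHist F g n as)
    (hq : (false, q) ∈ F (n :: as)) (hb : b ∈ g q) : ValidHist F g n (as ++ [b]) := by
  intro k hk
  rw [List.length_append, List.length_singleton] at hk
  rcases Nat.lt_succ_iff_lt_or_eq.1 hk with hk | rfl
  · rw [List.take_append_of_le_length hk.le, List.getElem_append_left hk]
    exact has k hk
  · exact ⟨q, by simpa using hq, by simpa using hb⟩

theorem RunsTo.haltsTo {as : List ℕ} (h : RunsTo F g n m as) (has : ValidHist F g n as) :
    HaltsTo F g n m := by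
  induction h with
  | halt as hm => exact ⟨as, has, hm⟩
  | query as q b hq hb _ ih => exact ih (has.concat hq hb)

theorem ValidHist.runsTo_take {as : List ℕ} (has : ValidHist F g n as)
    (hm : (true, m) ∈ F (n :: as)) {k : ℕ} (hk : k ≤ as.length) : RunsTo F g n m (as.take k) := by
  induction hk using Nat.decreasingInduction with
  | self => exact .halt _ (by rwa [List.take_length])
  | of_succ k hk ih =>
    obtain ⟨q, hq, hb⟩ := has k hk
    exact .query _ q _ hq hb (by rwa [List.take_append_getElem])

theorem haltsTo_iff_runsTo_nil : HaltsTo F g n m ↔ RunsTo F g n m [] := by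
  constructor
  · rintro ⟨as, has, hm⟩
    simpa using has.runsTo_take hm (Nat.zero_le _)
  · exact fun h => h.haltsTo fun k hk => absurd hk (Nat.not_lt_zero k)

theorem RunsTo.unique {as : List ℕ} (h : RunsTo F g n m as) (h' : RunsTo F g n m' as) :
    m = m' := by
  induction h with
  | halt as hm =>
    cases h' with
    | halt _ hm' => exact congrArg Prod.snd (Part.mem_unique hm hm')
    | query _ q b hq => exact absurd (congrArg Prod.fst (Part.mem_unique hm hq)) (by simp)
  | query as q b hq hb _ ih =>
    cases h' with
    | halt _ hm' => exact absurd (congrArg Prod.fst (Part.mem_unique hq hm')) (by simp)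
    | query _ q' b' hq' hb' h' =>
      obtain rfl : q = q' := congrArg Prod.snd (Part.mem_unique hq hq')
      obtain rfl : b = b' := Part.mem_unique hb hb'
      exact ih h'

theorem HaltsTo.unique (h : HaltsTo F g n m) (h' : HaltsTo F g n m') : m = m' :=
  (haltsTo_iff_runsTo_nil.1 h).unique (haltsTo_iff_runsTo_nil.1 h')

theorem ValidHist.congr {as : List ℕ} (hF : ∀ as, F (n :: as) = F' (n' :: as))
    (h : ValidHist F g n as) : ValidHist F' g n' as := fun k hk => hF (as.take k) ▸ h k hk

theorem HaltsTo.congr (hF : ∀ as, F (n :: as) = F' (n' :: as)) :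
    HaltsTo F g n m → HaltsTo F' g n' m := fun ⟨as, has, hm⟩ => ⟨as, has.congr hF, hF as ▸ hm⟩

end Runs

section Reductions

theorem subTuringLE_iff_exists_reducesVia {f g : ℕ →. ℕ} :
    SubTuringLE f g ↔ ∃ c, ReducesVia f g c := by
  constructor
  · rintro ⟨F, hF, h⟩
    obtain ⟨e, rfl⟩ := exists_phi_eq hF
    exact ⟨e, h⟩
  · rintro ⟨c, h⟩
    exact ⟨phi c, phi_partrec.comp (Computable.const c) Computable.id, h⟩

theorem reducesVia_coe_iff {X : ℕ → ℕ} {g : ℕ →. ℕ} {c : ℕ} :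
    ReducesVia (X : ℕ →. ℕ) g c ↔ ∀ n, HaltsTo (phi c) g n (X n) := by
  simp [ReducesVia]

theorem exists_reducesVia_of_computable {X : ℕ → ℕ} (hX : Computable X) :
    ∃ c, ∀ g : ℕ →. ℕ, ReducesVia (X : ℕ →. ℕ) g c := by
  have hF : Computable fun l : List ℕ => (true, X l.headI) :=
    (Computable.const true).pair (hX.comp Primrec.list_headI.to_comp)
  obtain ⟨c, hc⟩ := exists_phi_eq hF.partrec
  refine ⟨c, fun g => reducesVia_coe_iff.2 fun n => haltsTo_iff_runsTo_nil.2 (.halt _ ?_)⟩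
  simp [hc]

theorem exists_reducesVia_comp {s : ℕ → ℕ} (hs : Computable s) :
    ∃ c, ∀ X : ℕ → ℕ, ReducesVia ((X ∘ s : ℕ → ℕ) : ℕ →. ℕ) (X : ℕ →. ℕ) c := by
  have hF : Computable fun l : List ℕ =>
      bif l.tail.length == 0 then (false, s l.headI) else (true, l.tail.headI) :=
    .cond (Primrec.beq.comp (Primrec.list_length.comp .list_tail) (.const 0)).to_comp
      ((Computable.const false).pair (hs.comp Primrec.list_headI.to_comp))
      ((Computable.const true).pair (Primrec.list_headI.comp .list_tail).to_comp)
  obtain ⟨c, hc⟩ := exists_phi_eq hF.partrec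
  refine ⟨c, fun X => reducesVia_coe_iff.2 fun n => haltsTo_iff_runsTo_nil.2 ?_⟩
  exact .query [] (s n) (X (s n)) (by simp [hc]) (by simp) (.halt _ (by simp [hc]))

theorem subTuringLE_of_forall_mem_eq {f : ℕ →. ℕ} {h : ℕ → ℕ} (hfh : ∀ n m, m ∈ f n → m = h n) :
    SubTuringLE f (h : ℕ →. ℕ) := by
  obtain ⟨c, hc⟩ := exists_reducesVia_comp Computable.id
  refine subTuringLE_iff_exists_reducesVia.2 ⟨c, fun n m hm => ?_⟩
  rw [hfh n m hm]
  exact reducesVia_coe_iff.1 (hc h) n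

end Reductions

section Composition

/-- Configurations `((d, e, n), bs, cs, rest)` of the machine computing `phi d` relative to a
function computed by `phi e`, on input `n`: `bs` are the answers obtained so far for the outer
machine `d`, `cs` are the oracle answers used so far by the inner run of `e` on the pending query of
`d`, and `rest` are the oracle answers not yet used. -/
abbrev CompConfig : Type := (ℕ × ℕ × ℕ) × List ℕ × List ℕ × List ℕ

/-- The effect of an output `o` of the inner machine on a configuration of the composition: an
answer is passed to the outer machine, and a query is answered from the unused oracle answers or,
if there are none, asked. -/
def compResume (s : CompConfig) (o : Bool × ℕ) : (Bool × ℕ) ⊕ CompConfig :=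
  bif o.1 then .inr (s.1, s.2.1 ++ [o.2], [], s.2.2.2)
  else List.casesOn s.2.2.2 (.inl (false, o.2))
    fun a rest => .inr (s.1, s.2.1, s.2.2.1 ++ [a], rest)

/-- One simulation step of the composition of two oracle machines; iterated by `PFun.fix`. -/
def compStep : CompConfig →. (Bool × ℕ) ⊕ CompConfig
  | s@((d, e, n), bs, cs, _) => (phi d (n :: bs)).bind fun o =>
      bif o.1 then Part.some (.inl o) else (phi e (o.2 :: cs)).map (compResume s)

theorem compResume_primrec : Primrec₂ compResume := by
  have hrest : Primrec fun x : CompConfig × (Bool × ℕ) => x.1.2.2.2 :=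
    Primrec.snd.comp (Primrec.snd.comp (Primrec.snd.comp .fst))
  have hanswer : Primrec fun x : CompConfig × (Bool × ℕ) =>
      (.inr (x.1.1, x.1.2.1 ++ [x.2.2], [], x.1.2.2.2) : (Bool × ℕ) ⊕ CompConfig) :=
    Primrec.sumInr.comp ((Primrec.fst.comp .fst).pair ((Primrec.list_concat.comp
      (Primrec.fst.comp (Primrec.snd.comp .fst)) (Primrec.snd.comp .snd)).pair
        ((Primrec.const []).pair hrest)))
  have hask : Primrec fun x : CompConfig × (Bool × ℕ) =>
      (.inl (false, x.2.2) : (Bool × ℕ) ⊕ CompConfig) :=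
    Primrec.sumInl.comp ((Primrec.const false).pair (Primrec.snd.comp .snd))
  have hreuse : Primrec₂ fun (x : CompConfig × (Bool × ℕ)) (l : ℕ × List ℕ) =>
      (.inr (x.1.1, x.1.2.1, x.1.2.2.1 ++ [l.1], l.2) : (Bool × ℕ) ⊕ CompConfig) :=
    Primrec.sumInr.comp ((Primrec.fst.comp (Primrec.fst.comp .fst)).pair
      ((Primrec.fst.comp (Primrec.snd.comp (Primrec.fst.comp .fst))).pair
        ((Primrec.list_concat.comp
          (Primrec.fst.comp (Primrec.snd.comp (Primrec.snd.comp (Primrec.fst.comp .fst))))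
          (Primrec.fst.comp .snd)).pair (Primrec.snd.comp .snd))))
  exact (Primrec.cond (Primrec.fst.comp .snd) hanswer
    (Primrec.list_casesOn hrest hask hreuse)).to₂

theorem compStep_partrec : Partrec compStep := by
  have houter : Partrec fun s : CompConfig => phi s.1.1 (s.1.2.2 :: s.2.1) :=
    phi_partrec.comp (Computable.fst.comp .fst) (Computable.list_cons.comp
      (Computable.snd.comp (Computable.snd.comp .fst)) (Computable.fst.comp .snd))
  have hinner : Partrec fun x : CompConfig × (Bool × ℕ) => phi x.1.1.2.1 (x.2.2 :: x.1.2.2.1) :=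
    phi_partrec.comp (Computable.fst.comp (Computable.snd.comp (Computable.fst.comp .fst)))
      (Computable.list_cons.comp (Computable.snd.comp .snd)
        (Computable.fst.comp (Computable.snd.comp (Computable.snd.comp .fst))))
  exact houter.bind (Partrec.cond (Computable.fst.comp .snd)
    (Computable.sumInl.comp .snd).partrec
    (hinner.map (compResume_primrec.to_comp.comp (Computable.fst.comp .fst) .snd).to₂)).to₂

section

variable {d e n : ℕ} {as bs cs rest : List ℕ}

/-- `CompReaches d e n as bs cs`: having consumed the oracle answers `as` on input `n`, the
composition of `d` with `e` has collected the answers `bs` for the outer machine and `cs` for the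
current inner run. -/
def CompReaches (d e n : ℕ) (as bs cs : List ℕ) : Prop :=
  ∀ rest, PFun.fix compStep ((d, e, n), [], [], as ++ rest) =
    PFun.fix compStep ((d, e, n), bs, cs, rest)

theorem mem_compStep_of_inner {q : ℕ} {o : Bool × ℕ} (hq : (false, q) ∈ phi d (n :: bs))
    (ho : o ∈ phi e (q :: cs)) :
    compResume ((d, e, n), bs, cs, rest) o ∈ compStep ((d, e, n), bs, cs, rest) :=
  Part.mem_bind hq (Part.mem_map _ ho)

theorem CompReaches.inner_query {q r : ℕ} (h : CompReaches d e n as bs cs)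
    (hq : (false, q) ∈ phi d (n :: bs)) (hr : (false, r) ∈ phi e (q :: cs)) (a : ℕ) :
    CompReaches d e n (as ++ [a]) bs (cs ++ [a]) := fun rest => by
  rw [List.append_assoc, h]
  exact PFun.fix_fwd_eq (mem_compStep_of_inner hq hr)

theorem CompReaches.inner_halt {q b : ℕ} (h : CompReaches d e n as bs cs)
    (hq : (false, q) ∈ phi d (n :: bs)) (hb : (true, b) ∈ phi e (q :: cs)) :
    CompReaches d e n as (bs ++ [b]) [] := fun rest => by
  rw [h]
  exact PFun.fix_fwd_eq (mem_compStep_of_inner hq hb)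

theorem CompReaches.mem_fix {o : Bool × ℕ} (h : CompReaches d e n as bs cs)
    (ho : .inl o ∈ compStep ((d, e, n), bs, cs, [])) :
    o ∈ PFun.fix compStep ((d, e, n), [], [], as) := by
  have hfix := h []
  rw [List.append_nil] at hfix
  exact hfix ▸ PFun.mem_fix_iff.2 (.inl ho)

variable {F : List ℕ →. Bool × ℕ} {k : ℕ →. ℕ} {m : ℕ}
  (hF : ∀ as, F (n :: as) = PFun.fix compStep ((d, e, n), [], [], as))

include hF

theorem RunsTo.comp_inner {q b : ℕ} (hrun : RunsTo (phi e) k q b cs)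
    (hq : (false, q) ∈ phi d (n :: bs))
    (hcont : ∀ {as}, CompReaches d e n as (bs ++ [b]) [] → RunsTo F k n m as)
    (has : CompReaches d e n as bs cs) : RunsTo F k n m as := by
  induction hrun generalizing as with
  | halt cs hb => exact hcont (has.inner_halt hq hb)
  | query cs r a hr ha _ ih =>
    refine .query as r a ?_ ha (ih (has.inner_query hq hr a))
    rw [hF]
    exact has.mem_fix (mem_compStep_of_inner hq hr)

theorem RunsTo.comp_outer {g : ℕ →. ℕ} (hrun : RunsTo (phi d) g n m bs) (hg : ReducesVia g k e)
    (has : CompReaches d e n as bs []) : RunsTo F k n m as := by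
  induction hrun generalizing as with
  | halt bs hm =>
    refine .halt as ?_
    rw [hF]
    exact has.mem_fix (Part.mem_bind hm (Part.mem_some _))
  | query bs q b hq hb _ ih =>
    exact (haltsTo_iff_runsTo_nil.1 (hg q b hb)).comp_inner hF hq ih has

end

theorem exists_computable_reducesVia_trans : ∃ comp : ℕ → ℕ → ℕ, Computable₂ comp ∧
    ∀ {f g k : ℕ →. ℕ} {d e : ℕ}, ReducesVia f g d → ReducesVia g k e →
      ReducesVia f k (comp d e) := by
  have hF : Partrec₂ fun (i : ℕ × ℕ) (l : List ℕ) =>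
      PFun.fix compStep ((i.1, i.2, l.headI), [], [], l.tail) :=
    compStep_partrec.fix.comp (Primrec.to_comp
      (((Primrec.fst.comp .fst).pair
        ((Primrec.snd.comp .fst).pair (Primrec.list_headI.comp .snd))).pair
        ((Primrec.const []).pair ((Primrec.const []).pair (Primrec.list_tail.comp .snd)))))
  obtain ⟨s, hs, hphi⟩ := exists_computable_phi_eq hF
  refine ⟨fun d e => s (d, e), hs, fun {f g k d e} hfg hgk n m hm => ?_⟩
  rw [haltsTo_iff_runsTo_nil, hphi]
  exact (haltsTo_iff_runsTo_nil.1 (hfg n m hm)).comp_outer (fun _ => rfl) hgk fun _ => rfl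

theorem SubTuringLE.trans {f g k : ℕ →. ℕ} (hfg : SubTuringLE f g) (hgk : SubTuringLE g k) :
    SubTuringLE f k := by
  rw [subTuringLE_iff_exists_reducesVia] at *
  obtain ⟨comp, -, hcomp⟩ := exists_computable_reducesVia_trans
  obtain ⟨d, hd⟩ := hfg
  obtain ⟨e, he⟩ := hgk
  exact ⟨comp d e, hcomp hd he⟩

end Composition

section Diagonalization

variable {F : List ℕ →. Bool × ℕ} {g : ℕ →. ℕ} {n m : ℕ}

/-- The machine `F` with every output other than `0` replaced by divergence. -/
def haltOnZero (F : List ℕ →. Bool × ℕ) : List ℕ →. Bool × ℕ := fun l =>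
  (F l).bind fun o => bif o.1 && !(o.2 == 0) then Part.none else Part.some o

theorem haltOnZero_partrec (hF : Partrec F) : Partrec (haltOnZero F) :=
  hF.bind (.cond (Primrec.and.comp (Primrec.fst.comp .snd)
    (Primrec.not.comp (Primrec.beq.comp (Primrec.snd.comp .snd) (.const 0)))).to_comp
      .none Computable.snd.partrec)

theorem mem_haltOnZero_iff {l : List ℕ} {o : Bool × ℕ} :
    o ∈ haltOnZero F l ↔ o ∈ F l ∧ (o.1 = true → o.2 = 0) := by
  have hkeep : ∀ o' : Bool × ℕ,
      (o ∈ bif o'.1 && !(o'.2 == 0) then Part.none else Part.some o') ↔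
        o = o' ∧ (o'.1 = true → o'.2 = 0) := by
    rintro ⟨_ | _, _ | k⟩ <;> simp
  simp only [haltOnZero, Part.mem_bind_iff, hkeep]
  grind

theorem haltsTo_haltOnZero_iff :
    HaltsTo (haltOnZero F) g n m ↔ HaltsTo F g n m ∧ m = 0 := by
  simp [HaltsTo, ValidHist, mem_haltOnZero_iff, ← exists_and_right, and_assoc]

theorem not_subTuringLE_tJump (X : ℕ → ℕ) :
    ¬ SubTuringLE (TJump X : ℕ →. ℕ) (X : ℕ →. ℕ) := by
  rintro ⟨F, hF, hred⟩
  obtain ⟨e, he⟩ := exists_phi_eq (haltOnZero_partrec hF)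
  have hT : HaltsTo F (X : ℕ →. ℕ) e (TJump X e) := hred e _ (by simp)
  by_cases hhalt : ∃ m, HaltsTo (phi e) (X : ℕ →. ℕ) e m
  · have hone : TJump X e = 1 := if_pos hhalt
    obtain ⟨m, hm⟩ := hhalt
    obtain ⟨hm, rfl⟩ := haltsTo_haltOnZero_iff.1 (he ▸ hm)
    exact one_ne_zero (hone.symm.trans (hT.unique hm))
  · have hzero : TJump X e = 0 := if_neg hhalt
    exact hhalt ⟨0, he ▸ haltsTo_haltOnZero_iff.2 ⟨hzero ▸ hT, rfl⟩⟩

end Diagonalization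

section ZeroSearch

variable {D : ℕ → ℕ} {n : ℕ} {as : List ℕ}

/-- Next output of the search for the least `j` with `D ⟨n, j⟩ = 0`, given the values `as` of
`D ⟨n, ·⟩` queried so far. -/
def zeroSearchStep (n : ℕ) (as : List ℕ) : Bool × ℕ :=
  if 0 ∈ as then (true, as.idxOf 0) else (false, Nat.pair n as.length)

/-- The oracle machine that returns the least `j` with `D ⟨n, j⟩ = 0` relative to `D`; the section
`n` is a parameter of the machine, and its input is ignored. -/
def zeroSearch (n : ℕ) : List ℕ →. Bool × ℕ := fun l => Part.some (zeroSearchStep n l.tail)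

theorem zeroSearch_partrec : Partrec₂ zeroSearch := by
  have hidx : Primrec fun p : ℕ × List ℕ => p.2.tail.idxOf 0 :=
    Primrec.list_idxOf.comp (.const 0) (Primrec.list_tail.comp .snd)
  have hlen : Primrec fun p : ℕ × List ℕ => p.2.tail.length :=
    Primrec.list_length.comp (Primrec.list_tail.comp .snd)
  have hmem : PrimrecPred fun p : ℕ × List ℕ => 0 ∈ p.2.tail :=
    (Primrec.nat_lt.comp hidx hlen).of_eq fun _ => List.idxOf_lt_length_iff
  exact (Primrec.ite hmem ((Primrec.const true).pair hidx)
    ((Primrec.const false).pair (Primrec₂.natPair.comp .fst hlen))).to_comp.partrec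

theorem mem_zeroSearch_halt_iff {x m : ℕ} :
    (true, m) ∈ zeroSearch n (x :: as) ↔ 0 ∈ as ∧ m = as.idxOf 0 := by
  by_cases h : 0 ∈ as <;> simp [zeroSearch, zeroSearchStep, h]

theorem mem_zeroSearch_query_iff {x q : ℕ} :
    (false, q) ∈ zeroSearch n (x :: as) ↔ 0 ∉ as ∧ q = Nat.pair n as.length := by
  by_cases h : 0 ∈ as <;> simp [zeroSearch, zeroSearchStep, h]

theorem validHist_zeroSearch_iff {x : ℕ} :
    ValidHist (zeroSearch n) (D : ℕ →. ℕ) x as ↔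
      ∀ (k : ℕ) (hk : k < as.length), 0 ∉ as.take k ∧ as[k] = D (Nat.pair n k) := by
  refine forall₂_congr fun k hk => ?_
  simp [mem_zeroSearch_query_iff, hk.le, and_assoc]

theorem haltsTo_zeroSearch_iff {x m : ℕ} :
    HaltsTo (zeroSearch n) (D : ℕ →. ℕ) x m ↔ IsLeast {j | D (Nat.pair n j) = 0} m := by
  simp only [HaltsTo, validHist_zeroSearch_iff, mem_zeroSearch_halt_iff]
  constructor
  · rintro ⟨as, has, hmem, rfl⟩
    have hlt : as.idxOf 0 < as.length := List.idxOf_lt_length_iff.2 hmem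
    refine ⟨by simp [← (has _ hlt).2], fun j hj => not_lt.1 fun hjm => (has _ hlt).1 ?_⟩
    have hget : as[j] = 0 := (has j (hjm.trans hlt)).2.trans hj
    exact List.mem_take_iff_getElem.2 ⟨j, by omega, hget⟩
  · rintro ⟨hm : D (Nat.pair n m) = 0, hleast⟩
    have hnotMem {k : ℕ} (hk : k ≤ m) : 0 ∉ (List.range k).map fun j => D (Nat.pair n j) := by
      simp only [List.mem_map, List.mem_range, not_exists, not_and]
      exact fun j hj hzero => (hj.trans_le hk).not_ge (hleast hzero)
    refine ⟨(List.range (m + 1)).map fun j => D (Nat.pair n j), fun k hk => ⟨?_, by simp⟩, ?_, ?_⟩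
    · rw [List.length_map, List.length_range] at hk
      rw [← List.map_take, List.take_range, min_eq_left hk.le]
      exact hnotMem (Nat.lt_succ_iff.1 hk)
    · exact List.mem_map.2 ⟨m, List.self_mem_range_succ, hm⟩
    · simp [List.range_succ, List.idxOf_append_of_notMem (hnotMem le_rfl), hm]

theorem subTuringLE_of_isLeast {h : ℕ → ℕ}
    (hh : ∀ n, IsLeast {j | D (Nat.pair n j) = 0} (h n)) :
    SubTuringLE (h : ℕ →. ℕ) (D : ℕ →. ℕ) := by
  refine ⟨fun l => zeroSearch l.headI l,
    zeroSearch_partrec.comp Primrec.list_headI.to_comp .id, fun n m hm => ?_⟩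
  obtain rfl : m = h n := by simpa using hm
  exact (haltsTo_zeroSearch_iff.2 (hh n)).congr fun _ => rfl

/-- Characteristic function of the projection `∃ j, D ⟨n, j⟩ = 0`. -/
def existsZero (D : ℕ → ℕ) (n : ℕ) : ℕ := if ∃ j, D (Nat.pair n j) = 0 then 1 else 0

theorem exists_tJump_comp_eq_existsZero :
    ∃ s : ℕ → ℕ, Computable s ∧ ∀ D : ℕ → ℕ, TJump D ∘ s = existsZero D := by
  obtain ⟨s, hs, hphi⟩ := exists_computable_phi_eq zeroSearch_partrec
  refine ⟨s, hs, fun D => funext fun n => ?_⟩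
  have hhalt : (∃ m, HaltsTo (phi (s n)) (D : ℕ →. ℕ) (s n) m) ↔ ∃ j, D (Nat.pair n j) = 0 := by
    simp only [hphi, haltsTo_zeroSearch_iff]
    exact ⟨fun ⟨m, hm⟩ => ⟨m, hm.1⟩, fun h => ⟨_, Nat.isLeast_find h⟩⟩
  simp only [Function.comp_apply, TJump, existsZero, hhalt]

end ZeroSearch

section JumpClosure

/-- Reducibility to `f` is closed under the Turing jump, uniformly in indices. -/
def JumpClosed (f : ℕ →. ℕ) : Prop :=
  ∃ q : ℕ → ℕ, Computable q ∧ ∀ (D : ℕ → ℕ) (d : ℕ),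
    ReducesVia (D : ℕ →. ℕ) f d → ReducesVia (TJump D : ℕ →. ℕ) f (q d)

/-- The operator `J` takes every `g` computing a total function to one computing its Turing jump,
uniformly in indices. -/
def DominatesJump (J : (ℕ →. ℕ) → (ℕ →. ℕ)) : Prop :=
  ∃ v : ℕ → ℕ, Computable v ∧ ∀ (D : ℕ → ℕ) (g : ℕ →. ℕ) (d : ℕ),
    ReducesVia (D : ℕ →. ℕ) g d → ReducesVia (TJump D : ℕ →. ℕ) (J g) (v d)

variable {J : (ℕ →. ℕ) → (ℕ →. ℕ)} {f : ℕ →. ℕ}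

theorem dominatesJump_of_monotone
    (hmono : ∃ u : ℕ → ℕ, Computable u ∧
      ∀ (f g : ℕ →. ℕ) (d : ℕ), ReducesVia f g d → ReducesVia (J f) (J g) (u d))
    (hjump : ∃ c, ∀ X : ℕ → ℕ, ReducesVia (TJump X : ℕ →. ℕ) (J (X : ℕ →. ℕ)) c) :
    DominatesJump J := by
  obtain ⟨u, hu, hmono⟩ := hmono
  obtain ⟨c, hjump⟩ := hjump
  obtain ⟨comp, hcomp, htrans⟩ := exists_computable_reducesVia_trans
  exact ⟨fun d => comp c (u d), hcomp.comp (.const c) hu,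
    fun D g d hd => htrans (hjump D) (hmono _ g d hd)⟩

theorem DominatesJump.jumpClosed (hJ : DominatesJump J) (hf : SubTuringLE (J f) f) :
    JumpClosed f := by
  obtain ⟨v, hv, hjump⟩ := hJ
  obtain ⟨e, he⟩ := subTuringLE_iff_exists_reducesVia.1 hf
  obtain ⟨comp, hcomp, htrans⟩ := exists_computable_reducesVia_trans
  exact ⟨fun d => comp (v d) e, hcomp.comp hv (.const e),
    fun D d hd => htrans (hjump D f d hd) he⟩

theorem JumpClosed.tJump_subTuringLE {X : ℕ → ℕ} (hf : JumpClosed f)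
    (hX : SubTuringLE (X : ℕ →. ℕ) f) : SubTuringLE (TJump X : ℕ →. ℕ) f := by
  obtain ⟨q, -, hjump⟩ := hf
  obtain ⟨d, hd⟩ := subTuringLE_iff_exists_reducesVia.1 hX
  exact subTuringLE_iff_exists_reducesVia.2 ⟨q d, hjump X d hd⟩

theorem JumpClosed.not_subTuringLE {X : ℕ → ℕ} (hf : JumpClosed f)
    (hX : SubTuringLE (X : ℕ →. ℕ) f) : ¬ SubTuringLE f (X : ℕ →. ℕ) := fun hfX =>
  not_subTuringLE_tJump X ((hf.tJump_subTuringLE hX).trans hfX)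

theorem JumpClosed.exists_existsZero_index (hf : JumpClosed f) :
    ∃ q : ℕ → ℕ, Computable q ∧ ∀ (D : ℕ → ℕ) (d : ℕ),
      ReducesVia (D : ℕ →. ℕ) f d → ReducesVia (existsZero D : ℕ →. ℕ) f (q d) := by
  obtain ⟨q, hq, hjump⟩ := hf
  obtain ⟨s, hs, hTs⟩ := exists_tJump_comp_eq_existsZero
  obtain ⟨k, hk⟩ := exists_reducesVia_comp hs
  obtain ⟨comp, hcomp, htrans⟩ := exists_computable_reducesVia_trans
  exact ⟨fun d => comp k (q d), hcomp.comp (.const k) hq,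
    fun D d hd => hTs D ▸ htrans (hk (TJump D)) (hjump D d hd)⟩

end JumpClosure

section EffectiveRecursion

open Encodable Nat.Partrec

variable {α : Type*} [Primcodable α]

theorem exists_delegating_index {sel : α → ℕ →. ℕ × ℕ} (hsel : Partrec₂ sel) :
    ∃ s : α → ℕ, Computable s ∧ ∀ (a : α) (X g : ℕ →. ℕ),
      (∀ n m, m ∈ X n → ∃ p ∈ sel a n, HaltsTo (phi p.1) g p.2 m) → ReducesVia X g (s a) := by
  have hF : Partrec₂ fun (a : α) (l : List ℕ) =>
      (sel a l.headI).bind fun p => phi p.1 (p.2 :: l.tail) :=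
    (hsel.comp .fst (Primrec.list_headI.to_comp.comp .snd)).bind
      (phi_partrec.comp (Computable.fst.comp .snd) (Computable.list_cons.comp
        (Computable.snd.comp .snd)
        (Primrec.list_tail.to_comp.comp (Computable.snd.comp .fst)))).to₂
  obtain ⟨s, hs, hphi⟩ := exists_computable_phi_eq hF
  refine ⟨s, hs, fun a X g hX n m hm => ?_⟩
  obtain ⟨p, hp, hhalt⟩ := hX n m hm
  refine hhalt.congr fun as => ?_
  simp [hphi, Part.eq_some_iff.2 hp]

/-- Effective recursion: `Q` computes `t a` from an index `s a` of a machine that may itself run any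
`t b`, so that properties of `t` can be proved by induction along `sel`. -/
theorem exists_recursive_index {sel : α → ℕ →. α × ℕ} (hsel : Partrec₂ sel) {Q : α → ℕ → ℕ}
    (hQ : Computable₂ Q) :
    ∃ t s : α → ℕ, (∀ a, t a = Q a (s a)) ∧ Computable t ∧ ∀ (a : α) (X g : ℕ →. ℕ),
      (∀ n m, m ∈ X n → ∃ p ∈ sel a n, HaltsTo (phi (t p.1)) g p.2 m) →
        ReducesVia X g (s a) := by
  have hlookup : Partrec₂ fun (x : ℕ × α) (n : ℕ) => (sel x.2 n).bind fun p =>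
      ((Denumerable.ofNat Code x.1).eval (encode p.1)).map fun i => (i, p.2) := by
    refine (hsel.comp (Computable.snd.comp .fst) .snd).bind (Partrec.map ?_ ?_)
    · exact eval_ofNat_partrec.comp (Computable.fst.comp (Computable.fst.comp .fst))
        (Computable.encode.comp (Computable.fst.comp .snd))
    · exact Computable.snd.pair (Computable.snd.comp (Computable.snd.comp .fst))
  obtain ⟨s, hs, hdel⟩ := exists_delegating_index hlookup
  have hG : Computable₂ fun (c : ℕ) (a : α) => Q a (s (c, a)) := hQ.comp .snd hs
  obtain ⟨c, hc⟩ := exists_self_referential_index hG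
  refine ⟨fun a => Q a (s (c, a)), fun a => s (c, a), fun _ => rfl,
    hG.comp (.const c) .id, fun a X g hX => hdel _ X g fun n m hm => ?_⟩
  obtain ⟨p, hp, hhalt⟩ := hX n m hm
  exact ⟨_, Part.mem_bind hp (Part.mem_map _ (by rw [hc]; exact Part.mem_some _)), hhalt⟩

end EffectiveRecursion

section JumpHierarchy

open Nat.Partrec

theorem exists_primrec_leftInverse {e : ℕ → ℕ} (he : Primrec e) (hmono : StrictMono e) :
    ∃ d : ℕ → ℕ, Primrec d ∧ Function.LeftInverse d e := by
  refine ⟨fun a => a.findGreatest fun b => e b = a,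
    Primrec.nat_findGreatest .id (Primrec.eq.comp (he.comp .snd) .fst), fun b => ?_⟩
  exact hmono.injective (Nat.findGreatest_spec (P := fun c => e c = e b) hmono.le_apply rfl)

theorem nat_pow_primrec : Primrec₂ ((· ^ ·) : ℕ → ℕ → ℕ) :=
  Primrec₂.unpaired'.1 Nat.Primrec.pow

theorem two_pow_ne_three_mul_five_pow (b e : ℕ) : 2 ^ b ≠ 3 * 5 ^ e := fun h => by
  have h3 : 3 ∣ 2 ^ b := h ▸ dvd_mul_right _ _
  exact absurd (Nat.prime_three.dvd_of_dvd_pow h3) (by norm_num)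

theorem exists_primrec_two_pow_decoder : ∃ d : ℕ → ℕ, Primrec d ∧ ∀ b, d (2 ^ b) = b :=
  exists_primrec_leftInverse (nat_pow_primrec.comp (.const 2) .id)
    (pow_right_strictMono₀ one_lt_two)

theorem exists_notation_descent : ∃ sel : ℕ → ℕ →. ℕ × ℕ, Partrec₂ sel ∧
    (∀ b n, (b, n) ∈ sel (2 ^ b) n) ∧
    ∀ (e : ℕ) (g : ℕ → ℕ), (∀ n, (Denumerable.ofNat Code e).eval n = Part.some (g n)) →
      ∀ n : ℕ, (g n.unpair.1, n.unpair.2) ∈ sel (3 * 5 ^ e) n := by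
  obtain ⟨dtwo, hdtwo, hdtwo_pow⟩ := exists_primrec_two_pow_decoder
  obtain ⟨dlim, hdlim, hdlim_pow⟩ := exists_primrec_leftInverse
    (Primrec.nat_mul.comp (.const 3) (nat_pow_primrec.comp (.const 5) .id))
    ((pow_right_strictMono₀ (by norm_num : 1 < 5)).const_mul three_pos)
  refine ⟨fun a n => bif 2 ^ dtwo a == a then Part.some (dtwo a, n) else
    ((Denumerable.ofNat Code (dlim a)).eval n.unpair.1).map fun b => (b, n.unpair.2),
    Partrec.cond ?_ ?_ (Partrec.map ?_ ?_), fun b n => ?_, fun e g hg n => ?_⟩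
  · exact (Primrec.beq.comp (nat_pow_primrec.comp (.const 2) (hdtwo.comp .fst)) .fst).to_comp
  · exact ((hdtwo.to_comp.comp .fst).pair .snd).partrec
  · exact eval_ofNat_partrec.comp (hdlim.to_comp.comp .fst)
      (Computable.fst.comp (Computable.unpair.comp .snd))
  · exact Computable.snd.pair
      (Computable.snd.comp (Computable.unpair.comp (Computable.snd.comp .fst)))
  · simp [hdtwo_pow]
  · have hlim : dlim (3 * 5 ^ e) = e := hdlim_pow e
    simp [beq_false_of_ne (two_pow_ne_three_mul_five_pow _ e), hlim, hg]

theorem exists_notation_cases (k : ℕ) {q : ℕ → ℕ} (hq : Computable q) :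
    ∃ Q : ℕ → ℕ → ℕ, Computable₂ Q ∧ (∀ i, Q 1 i = k) ∧ (∀ b ≠ 0, ∀ i, Q (2 ^ b) i = q i) ∧
      ∀ e i, Q (3 * 5 ^ e) i = i := by
  obtain ⟨dtwo, hdtwo, hdtwo_pow⟩ := exists_primrec_two_pow_decoder
  refine ⟨fun a i => bif a == 1 then k else bif 2 ^ dtwo a == a then q i else i,
    Computable.cond ?_ (.const k) (Computable.cond ?_ (hq.comp .snd) .snd), ?_, ?_, ?_⟩
  · exact (Primrec.beq.comp .fst (.const 1)).to_comp
  · exact (Primrec.beq.comp (nat_pow_primrec.comp (.const 2) (hdtwo.comp .fst)) .fst).to_comp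
  · simp
  · intro b hb i
    have hne : 2 ^ b ≠ 1 := by simpa using hb
    simp [hdtwo_pow, beq_false_of_ne hne]
  · intro e i
    have hne : 3 * 5 ^ e ≠ 1 := by omega
    simp [beq_false_of_ne (two_pow_ne_three_mul_five_pow _ e), beq_false_of_ne hne]

theorem OrdNotation.ne_zero {a : ℕ} (w : OrdNotation a) : a ≠ 0 := by
  cases w <;> simp

theorem JumpClosed.hset_subTuringLE {f : ℕ →. ℕ} (hf : JumpClosed f) {a : ℕ}
    (w : OrdNotation a) : SubTuringLE (Hset a w : ℕ →. ℕ) f := by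
  obtain ⟨q, hq, hjump⟩ := hf
  obtain ⟨k, hk⟩ := exists_reducesVia_of_computable (Computable.const 0)
  obtain ⟨sel, hsel, hsel_succ, hsel_lim⟩ := exists_notation_descent
  obtain ⟨Q, hQ, hQ_one, hQ_succ, hQ_lim⟩ := exists_notation_cases k hq
  obtain ⟨t, s, ht, -, hs⟩ := exists_recursive_index hsel hQ
  suffices h : ReducesVia (Hset a w : ℕ →. ℕ) f (t a) from
    subTuringLE_iff_exists_reducesVia.2 ⟨t a, h⟩
  induction w with
  | one =>
    rw [ht, hQ_one]
    exact hk f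
  | succ b w ih =>
    rw [ht, hQ_succ b w.ne_zero]
    exact hjump _ _ (hs _ _ f fun n m hm => ⟨_, hsel_succ b n, ih n m hm⟩)
  | lim e g hg w ih =>
    rw [ht, hQ_lim]
    exact hs _ _ f fun n m hm =>
      ⟨_, hsel_lim e g hg n, ih n.unpair.1 n.unpair.2 m hm⟩

end JumpHierarchy

section Separation

/-- The initial segment `X̄k`, as it occurs in `Sigma11`. -/
def initSeg (X : ℕ → ℕ) (k : ℕ) : List ℕ := List.ofFn fun i : Fin k => X i

/-- `X` is an infinite path through `T`. -/
def IsPath (T : List ℕ → Bool) (X : ℕ → ℕ) : Prop := ∀ k, T (initSeg X k) = true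

theorem initSeg_succ (X : ℕ → ℕ) (k : ℕ) : initSeg X (k + 1) = initSeg X k ++ [X k] := by
  rw [initSeg, List.ofFn_succ_last]
  rfl

section Game

variable {A B : List ℕ → Bool} {X Y : ℕ → ℕ} {p : List ℕ × List ℕ}

/-- The position reached from `p` when the two players append `i` and `j`. -/
def extendBy (p : List ℕ × List ℕ) (i j : ℕ) : List ℕ × List ℕ := (p.1 ++ [i], p.2 ++ [j])

/-- `p'` is the next position after `p` in the game where the first player tries to stay in `A`
and the second player tries to stay in `B`; the game ends as soon as one of them fails. -/
def GameStep (A B : List ℕ → Bool) (p' p : List ℕ × List ℕ) : Prop :=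
  (A p.1 = true ∧ B p.2 = true) ∧ ∃ i j, p' = extendBy p i j

/-- The first player can force a win from the position: the second player leaves `B` before the
first player leaves `A`. -/
inductive Wins (A B : List ℕ → Bool) : List ℕ × List ℕ → Prop
  | won (p : List ℕ × List ℕ) : A p.1 = true → B p.2 = false → Wins A B p
  | move (p : List ℕ × List ℕ) (i : ℕ) : A p.1 = true → B p.2 = true →
      (∀ j, Wins A B (extendBy p i j)) → Wins A B p

/-- Characteristic function of `Wins`. -/
def gameValue (A B : List ℕ → Bool) (p : List ℕ × List ℕ) : ℕ := if Wins A B p then 1 else 0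

theorem acc_gameStep_nil (hAB : ∀ X Y, IsPath A X → ¬ IsPath B Y) :
    Acc (GameStep A B) ([], []) := by
  by_contra hacc
  obtain ⟨s, hs_zero, hs⟩ := not_acc_iff_exists_descending_chain.1 hacc
  choose hmem X Y hsucc using hs
  have hseg (k : ℕ) : s k = (initSeg X k, initSeg Y k) := by
    induction k with
    | zero => simp [hs_zero, initSeg]
    | succ k ih => rw [hsucc, ih, initSeg_succ, initSeg_succ, extendBy]
  simp only [hseg] at hmem
  exact hAB X Y (fun k => (hmem k).1) fun k => (hmem k).2

theorem IsPath.wins (hX : IsPath A X) (hp : Acc (GameStep A B) p) {k : ℕ}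
    (hk : p.1 = initSeg X k) : Wins A B p := by
  induction hp generalizing k with
  | intro p _ ih =>
    have hA : A p.1 = true := hk ▸ hX k
    cases hB : B p.2 with
    | false => exact .won p hA hB
    | true =>
      refine .move p (X k) hA hB fun j => ih _ ⟨⟨hA, hB⟩, X k, j, rfl⟩ (k := k + 1) ?_
      rw [initSeg_succ, ← hk, extendBy]

theorem IsPath.not_wins (hY : IsPath B Y) {k : ℕ} (hk : p.2 = initSeg Y k) : ¬ Wins A B p := by
  intro hp
  induction hp generalizing k with
  | won p _ hB =>
    rw [hk, hY k] at hB
    contradiction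
  | move p i _ _ _ ih => exact ih (Y k) (k := k + 1) (by rw [initSeg_succ, ← hk, extendBy])

theorem wins_iff_exists_forall (hA : A p.1 = true) (hB : B p.2 = true) :
    Wins A B p ↔ ∃ i, ∀ j, Wins A B (extendBy p i j) := by
  refine ⟨fun hp => ?_, fun ⟨i, hi⟩ => .move p i hA hB hi⟩
  cases hp with
  | won _ _ hB' => simp [hB] at hB'
  | move _ i _ _ hi => exact ⟨i, hi⟩

theorem gameValue_of_not_mem_left (hA : A p.1 = false) : gameValue A B p = 0 :=
  if_neg fun hp => by cases hp <;> simp_all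

theorem gameValue_of_not_mem_right (hA : A p.1 = true) (hB : B p.2 = false) :
    gameValue A B p = 1 := if_pos (.won p hA hB)

theorem existsZero_existsZero_gameValue (hA : A p.1 = true) (hB : B p.2 = true) :
    (existsZero <| existsZero fun m => gameValue A B (extendBy p m.unpair.1.unpair.2 m.unpair.2)) =
      fun _ => gameValue A B p := by
  funext n
  simp [existsZero, gameValue, wins_iff_exists_forall hA hB]

end Game

variable {f : ℕ →. ℕ}

/-- The game value is found by bar recursion: it costs two jumps to pass from the positions
following `p` to `p`. -/
theorem JumpClosed.exists_gameValue_index (hf : JumpClosed f) {A B : ℕ → List ℕ → Bool}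
    (hA : Computable₂ A) (hB : Computable₂ B) :
    ∃ t : ℕ × List ℕ × List ℕ → ℕ, Computable t ∧
      ∀ {x : ℕ} {p : List ℕ × List ℕ}, Acc (GameStep (A x) (B x)) p →
        ReducesVia ((fun _ => gameValue (A x) (B x) p : ℕ → ℕ) : ℕ →. ℕ) f (t (x, p)) := by
  obtain ⟨q, hq, hproj⟩ := hf.exists_existsZero_index
  obtain ⟨kzero, hkzero⟩ := exists_reducesVia_of_computable (Computable.const 0)
  obtain ⟨kone, hkone⟩ := exists_reducesVia_of_computable (Computable.const 1)
  have hsel : Partrec₂ fun (a : ℕ × List ℕ × List ℕ) (m : ℕ) =>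
      Part.some ((a.1, extendBy a.2 m.unpair.1.unpair.2 m.unpair.2), m) :=
    have hp : Primrec fun x : (ℕ × List ℕ × List ℕ) × ℕ => x.1.2 := Primrec.snd.comp .fst
    have hmoves : Primrec fun x : (ℕ × List ℕ × List ℕ) × ℕ => x.2.unpair :=
      Primrec.unpair.comp .snd
    have hi : Primrec fun x : (ℕ × List ℕ × List ℕ) × ℕ => x.2.unpair.1.unpair.2 :=
      Primrec.snd.comp (Primrec.unpair.comp (Primrec.fst.comp hmoves))
    have hnext := (Primrec.list_concat.comp (Primrec.fst.comp hp) hi).pair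
      (Primrec.list_concat.comp (Primrec.snd.comp hp) (Primrec.snd.comp hmoves))
    (((Primrec.fst.comp .fst).pair hnext).pair .snd).to_comp.partrec
  have hQ : Computable₂ fun (a : ℕ × List ℕ × List ℕ) (i : ℕ) =>
      bif A a.1 a.2.1 then bif B a.1 a.2.2 then q (q i) else kone else kzero :=
    .cond (hA.comp (Computable.fst.comp .fst) (Computable.fst.comp (Computable.snd.comp .fst)))
      (.cond (hB.comp (Computable.fst.comp .fst) (Computable.snd.comp (Computable.snd.comp .fst)))
        (hq.comp (hq.comp .snd)) (.const kone)) (.const kzero)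
  obtain ⟨t, s, ht, htc, hs⟩ := exists_recursive_index hsel hQ
  refine ⟨t, htc, fun {x p} hp => ?_⟩
  induction hp with
  | intro p _ ih =>
    rw [ht]
    cases hAp : A x p.1 with
    | false =>
      rw [gameValue_of_not_mem_left hAp]
      exact hkzero f
    | true => cases hBp : B x p.2 with
      | false =>
        rw [gameValue_of_not_mem_right hAp hBp]
        exact hkone f
      | true =>
        rw [← existsZero_existsZero_gameValue hAp hBp]
        refine hproj _ _ (hproj _ _ (hs _ _ f fun n m hm => ⟨_, Part.mem_some _, ?_⟩))
        exact ih _ ⟨⟨hAp, hBp⟩, _, _, rfl⟩ n m hm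

theorem JumpClosed.exists_separator (hf : JumpClosed f) {S T : ℕ → Prop} (hS : Sigma11 S)
    (hT : Sigma11 T) (hST : ∀ x, S x → ¬ T x) :
    ∃ V : ℕ → ℕ, SubTuringLE (V : ℕ →. ℕ) f ∧ ∀ x, (S x → V x = 1) ∧ (T x → V x = 0) := by
  obtain ⟨A, hA, hSA⟩ := hS
  obtain ⟨B, hB, hTB⟩ := hT
  have hacc (x : ℕ) : Acc (GameStep (A x) (B x)) ([], []) :=
    acc_gameStep_nil fun X Y hX hY => hST x ((hSA x).2 ⟨X, hX⟩) ((hTB x).2 ⟨Y, hY⟩)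
  obtain ⟨t, ht, hvalue⟩ := hf.exists_gameValue_index hA hB
  have hsel : Partrec₂ fun (_ : Unit) (x : ℕ) => Part.some (t (x, [], []), x) :=
    Computable.partrec <| (ht.comp (Computable.snd.pair (.const ([], [])))).pair .snd
  obtain ⟨s, -, hs⟩ := exists_delegating_index hsel
  refine ⟨fun x => gameValue (A x) (B x) ([], []),
    subTuringLE_iff_exists_reducesVia.2 ⟨s (), hs () _ f fun x m hm =>
      ⟨_, Part.mem_some _, hvalue (hacc x) x m hm⟩⟩, fun x => ⟨fun hx => ?_, fun hx => ?_⟩⟩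
  · obtain ⟨X, hX⟩ := (hSA x).1 hx
    exact if_pos (IsPath.wins (k := 0) hX (hacc x) rfl)
  · obtain ⟨Y, hY⟩ := (hTB x).1 hx
    exact if_neg (IsPath.not_wins (k := 0) hY rfl)

theorem JumpClosed.delta11_subTuringLE (hf : JumpClosed f) {h : ℕ → ℕ} (hh : Delta11Fun h) :
    SubTuringLE (h : ℕ →. ℕ) f := by
  obtain ⟨V, hVf, hV⟩ := hf.exists_separator hh.2 hh.1 fun _ => id
  have hzero (n : ℕ) : {j | V (Nat.pair n j) = 0} = {h n} := by
    ext j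
    have hsep := hV (Nat.pair n j)
    simp only [Nat.unpair_pair] at hsep
    by_cases hj : h n = j <;> simp_all [eq_comm]
  exact (subTuringLE_of_isLeast fun n => hzero n ▸ isLeast_singleton).trans hVf

end Separation

theorem jump_strict_on_hyperarithmetical_general {J : (ℕ →. ℕ) → (ℕ →. ℕ)}
    (hJ : DominatesJump J) :
    (∀ f : ℕ →. ℕ, (∃ h : ℕ → ℕ, Delta11Fun h ∧ ∀ n m, m ∈ f n → m = h n) →
      ¬ SubTuringLE (J f) f) ∧
    (∀ f : ℕ →. ℕ, SubTuringLE (J f) f → ∀ (a : ℕ) (w : OrdNotation a),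
      SubTuringLE (Hset a w : ℕ →. ℕ) f ∧ ¬ SubTuringLE f (Hset a w : ℕ →. ℕ)) := by
  refine ⟨fun f ⟨h, hh, hfh⟩ hf => ?_, fun f hf a w => ?_⟩
  · have hclosed := hJ.jumpClosed hf
    exact hclosed.not_subTuringLE (hclosed.delta11_subTuringLE hh)
      (subTuringLE_of_forall_mem_eq hfh)
  · have hclosed := hJ.jumpClosed hf
    have hle := hclosed.hset_subTuringLE w
    exact ⟨hle, hclosed.not_subTuringLE hle⟩

theorem jump_strict_on_hyperarithmetical (J : (ℕ →. ℕ) → (ℕ →. ℕ))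
    (hinf : ∃ c : ℕ, ∀ f : ℕ →. ℕ, ReducesVia f (J f) c)
    (hmono : ∃ u : ℕ → ℕ, Computable u ∧
      ∀ (f g : ℕ →. ℕ) (d : ℕ), ReducesVia f g d → ReducesVia (J f) (J g) (u d))
    (hcons : ∃ c₁ c₂ : ℕ, ∀ f : ℕ → ℕ,
      ReducesVia (J (f : ℕ →. ℕ)) ((TJump f : ℕ → ℕ) : ℕ →. ℕ) c₁ ∧
      ReducesVia ((TJump f : ℕ → ℕ) : ℕ →. ℕ) (J (f : ℕ →. ℕ)) c₂) :
    (∀ f : ℕ →. ℕ,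
      (∃ h : ℕ → ℕ, Delta11Fun h ∧ ∀ n m, m ∈ f n → m = h n) →
      SubTuringLE f (J f) ∧ ¬ SubTuringLE (J f) f) ∧
    (∀ f : ℕ →. ℕ, SubTuringEquiv (J f) f →
      ∀ (a : ℕ) (w : OrdNotation a),
        SubTuringLE ((Hset a w : ℕ → ℕ) : ℕ →. ℕ) f ∧
        ¬ SubTuringLE f ((Hset a w : ℕ → ℕ) : ℕ →. ℕ)) := by
  obtain ⟨c, hinf⟩ := hinf
  obtain ⟨_, c₂, hjump⟩ := hcons
  obtain ⟨hstrict, habove⟩ := jump_strict_on_hyperarithmetical_general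
    (dominatesJump_of_monotone hmono ⟨c₂, fun X => (hjump X).2⟩)
  exact ⟨fun f hf => ⟨subTuringLE_iff_exists_reducesVia.2 ⟨c, hinf f⟩, hstrict f hf⟩,
    fun f hf => habove f hf.1⟩
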